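/- Let g be three times continuously differentiable on an open set containing [0,1]ⁿ with |D^J g(x)| ≤ δ for every x ∈ [0,1]ⁿ and every multi-index J with |J| = 3, let ε > 0, and let f be a layered feedforward network on ℝⁿ of depth d with widths ω₁, …, ω_d whose activation σ is piecewise linear with t pieces, such that f is an ε-approximation of g on [0,1]ⁿ. Then ((t − 1)·ω + 1)^d ≥ sqrt( ( max_{z ∈ [0,1]ⁿ} |Δg(z)| · n⁻¹ − δ · n^{3/2} )⁺ / (16 ε) ), where ω = (ω₁ + … + ω_d)/d, Δg(z) = Σ_{k=1}^n ∂²g/∂x_k²(z) is the Laplacian of g, and a⁺ = max(a, 0). -/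

import Mathlib

noncomputable def hess {n : ℕ} (g : EuclideanSpace ℝ (Fin n) → ℝ)
    (z : EuclideanSpace ℝ (Fin n)) : Matrix (Fin n) (Fin n) ℝ :=
  fun i j => iteratedFDeriv ℝ 2 g z ![EuclideanSpace.single i 1, EuclideanSpace.single j 1]

/-- `σ : ℝ → ℝ` is piecewise linear with `t` pieces: `ℝ` is the union of `t` pairwise
disjoint nonempty intervals on each of which `σ` coincides with an affine function. -/
def PiecewiseLinear (σ : ℝ → ℝ) (t : ℕ) : Prop :=
  ∃ I : Fin t → Set ℝ,
    (∀ i, (I i).Nonempty) ∧ (∀ i, Convex ℝ (I i)) ∧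
    (Pairwise fun i j => Disjoint (I i) (I j)) ∧
    (⋃ i, I i) = Set.univ ∧
    ∀ i, ∃ a b : ℝ, ∀ z ∈ I i, σ z = a * z + b

/-- A layered feedforward network on `ℝⁿ`, allowing connections from all earlier layers
and from the input.  Layers are indexed by `0, …, depth - 1`. -/
structure LayeredNet (n : ℕ) where
  depth : ℕ
  width : ℕ → ℕ
  Win : (i : ℕ) → Fin (width i) → Fin n → ℝ
  W : (i j : ℕ) → Fin (width i) → Fin (width j) → ℝ
  b : (i : ℕ) → Fin (width i) → ℝ
  cin : Fin n → ℝ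
  c : (i : ℕ) → Fin (width i) → ℝ
  c0 : ℝ

/-- The output of the hidden units in layer `i`. -/
noncomputable def LayeredNet.layer {n : ℕ} (N : LayeredNet n) (σ : ℝ → ℝ)
    (x : EuclideanSpace ℝ (Fin n)) : (i : ℕ) → Fin (N.width i) → ℝ
  | i => fun k => σ ((∑ m, N.Win i k m * x m) +
      (∑ j : Fin i, ∑ m, N.W i j k m * N.layer σ x j m) + N.b i k)
  termination_by i => i
  decreasing_by exact j.isLt

/-- The (real-valued) output of the network with activation `σ`. -/
noncomputable def LayeredNet.eval {n : ℕ} (N : LayeredNet n) (σ : ℝ → ℝ)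
    (x : EuclideanSpace ℝ (Fin n)) : ℝ :=
  (∑ m, N.cin m * x m) + (∑ i ∈ Finset.range N.depth, ∑ m, N.c i m * N.layer σ x i m) + N.c0

/-- The number of hidden units `|H| = ω₁ + ⋯ + ω_d`. -/
def LayeredNet.numHidden {n : ℕ} (N : LayeredNet n) : ℕ :=
  ∑ i ∈ Finset.range N.depth, N.width i

/-- The unit cube `[0,1]ⁿ`. -/
def unitCube (n : ℕ) : Set (EuclideanSpace ℝ (Fin n)) :=
  {z | ∀ k, z k ∈ Set.Icc (0 : ℝ) 1}

/-! Along a line the network is a piecewise affine function of one variable. Composing with a layer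
of `ω` units multiplies the number of pieces by at most `(t - 1) * ω + 1`, since the breakpoints of
the `ω` units refine each piece at most `(t - 1) * ω` times; so there are at most
`∏ ((t - 1) * ωᵢ + 1) ≤ ((t - 1) * ω + 1) ^ d` pieces, by the inequality of arithmetic and geometric
means.

Along a unit segment parallel to the `k`-th axis through `z`, the mean value theorem keeps the
second derivative of `g` within `δ` of `∂²g/∂xₖ²(z)`, so `g` or `-g` is strongly convex there with
modulus `c = |∂²g/∂xₖ²(z)| - δ`. Comparing with an affine function at the endpoints and the midpoint
of an interval shows that a `c`-strongly convex function can be within `ε` of an affine one only on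
an interval of length at most `√(16 ε / c)`. Covering the unit segment by such intervals bounds the
number of pieces from below, and summing over `k` brings in the Laplacian. -/

section AffinePieces

variable {V W X : Type*} [AddCommGroup V] [Module ℝ V] [AddCommGroup W] [Module ℝ W]
  [AddCommGroup X] [Module ℝ X] {m p : ℕ}

/-- `F` is affine on each of at most `m` consecutive intervals covering `ℝ`. The intervals are
encoded as the fibres of a monotone labelling of `ℝ` by `Fin m`; fibres may be empty. -/
def HasAffinePieces (m : ℕ) (F : ℝ → W) : Prop :=
  ∃ r : ℝ → Fin m, Monotone r ∧ ∀ v, ∃ q : ℝ →ᵃ[ℝ] W, Set.EqOn F q (r ⁻¹' {v})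

/-- The restriction of `F` to every parametrized line has at most `m` affine pieces. Unlike
`HasAffinePieces`, this notion is stable under composition, with the numbers of pieces
multiplying. -/
def HasAffinePiecesOnLines (m : ℕ) (F : V → W) : Prop :=
  ∀ ℓ : ℝ →ᵃ[ℝ] V, HasAffinePieces m (F ∘ ℓ)

theorem HasAffinePieces.of_monotone {ι : Type*} [LinearOrder ι] [Fintype ι] {F : ℝ → W}
    {r : ℝ → ι} (hr : Monotone r)
    (hF : ∀ x, ∃ q : ℝ →ᵃ[ℝ] W, ∀ y, r y = r x → F y = q y) :
    HasAffinePieces (Fintype.card ι) F := by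
  let e : Fin (Fintype.card ι) ≃o ι := monoEquivOfFin ι rfl
  refine ⟨e.symm ∘ r, e.symm.monotone.comp hr, fun v ↦ ?_⟩
  by_cases hv : ∃ x, r x = e v
  · obtain ⟨x, hx⟩ := hv
    obtain ⟨q, hq⟩ := hF x
    exact ⟨q, fun y hy ↦ hq y (hx ▸ (e.symm_apply_eq.mp hy))⟩
  · exact ⟨0, fun y hy ↦ absurd ⟨y, e.symm_apply_eq.mp hy⟩ hv⟩

theorem monotone_or_antitone_affineMap (ℓ : ℝ →ᵃ[ℝ] ℝ) : Monotone ℓ ∨ Antitone ℓ := by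
  have hℓ (x y : ℝ) : ℓ y - ℓ x = (y - x) * ℓ.linear 1 := by
    rw [← smul_eq_mul, ← map_smul, smul_eq_mul, mul_one]
    exact (ℓ.linearMap_vsub y x).symm
  refine (le_total 0 (ℓ.linear 1)).imp (fun h x y hxy ↦ ?_) (fun h x y hxy ↦ ?_)
  · exact sub_nonneg.mp (hℓ x y ▸ mul_nonneg (sub_nonneg.mpr hxy) h)
  · exact sub_nonpos.mp (hℓ x y ▸ mul_nonpos_of_nonneg_of_nonpos (sub_nonneg.mpr hxy) h)

theorem HasAffinePieces.onLines {F : ℝ → W} (hF : HasAffinePieces m F) :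
    HasAffinePiecesOnLines m F := by
  intro ℓ
  obtain ⟨r, hr, hF⟩ := hF
  have hpiece (x : ℝ) : ∃ q : ℝ →ᵃ[ℝ] W, ∀ y, r (ℓ y) = r (ℓ x) → (F ∘ ℓ) y = q y := by
    obtain ⟨q, hq⟩ := hF (r (ℓ x))
    exact ⟨q.comp ℓ, fun y hy ↦ hq hy⟩
  rw [← Fintype.card_fin m]
  obtain hℓ | hℓ := monotone_or_antitone_affineMap ℓ
  · exact .of_monotone (hr.comp hℓ) hpiece
  · exact .of_monotone (ι := (Fin m)ᵒᵈ) (hr.comp_antitone hℓ).dual_right hpiece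

theorem hasAffinePiecesOnLines_affineMap (f : V →ᵃ[ℝ] W) : HasAffinePiecesOnLines 1 f :=
  fun ℓ ↦ ⟨fun _ ↦ 0, monotone_const, fun _ ↦ ⟨f.comp ℓ, fun _ _ ↦ rfl⟩⟩

/-- `F` sends each of its pieces into a line, along which `G` has at most `m` pieces; the pair of
labels is monotone for the lexicographic order. -/
theorem HasAffinePiecesOnLines.comp {G : W → X} {F : V → W} (hG : HasAffinePiecesOnLines m G)
    (hF : HasAffinePiecesOnLines p F) : HasAffinePiecesOnLines (p * m) (G ∘ F) := by
  intro ℓ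
  obtain ⟨r, hr, hF⟩ := hF ℓ
  choose q hq using hF
  choose s hs hGq using fun v ↦ hG (q v)
  have hcard : Fintype.card (Fin p ×ₗ Fin m) = p * m := by simp
  rw [← hcard]
  refine .of_monotone (r := fun x ↦ toLex (r x, s (r x) x)) (fun x y hxy ↦ ?_) fun x ↦ ?_
  · refine Prod.Lex.toLex_le_toLex.mpr ((hr hxy).lt_or_eq.imp_right fun h ↦ ⟨h, ?_⟩)
    exact (show r x = r y from h) ▸ hs (r x) hxy
  · obtain ⟨q', hq'⟩ := hGq (r x) (s (r x) x)
    refine ⟨q', fun y hy ↦ ?_⟩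
    obtain ⟨hry, hsy⟩ := Prod.mk.inj (toLex_inj.mp hy)
    calc G (F (ℓ y)) = G (q (r x) y) := congrArg G (hq (r x) hry)
      _ = q' y := hq' (show s (r x) y = s (r x) x from hry ▸ hsy)

theorem HasAffinePiecesOnLines.comp_affineMap {G : W → X} (hG : HasAffinePiecesOnLines m G)
    (f : V →ᵃ[ℝ] W) : HasAffinePiecesOnLines m (G ∘ f) :=
  fun ℓ ↦ hG (f.comp ℓ)

theorem HasAffinePiecesOnLines.affineMap_comp {F : V → W} (hF : HasAffinePiecesOnLines m F)
    (f : W →ᵃ[ℝ] X) : HasAffinePiecesOnLines m (f ∘ F) :=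
  mul_one m ▸ (hasAffinePiecesOnLines_affineMap f).comp hF

theorem HasAffinePiecesOnLines.affineMap_add {G : V → W} (hG : HasAffinePiecesOnLines m G)
    (f : V →ᵃ[ℝ] W) : HasAffinePiecesOnLines m fun x ↦ f x + G x := by
  intro ℓ
  obtain ⟨r, hr, hG⟩ := hG ℓ
  refine ⟨r, hr, fun v ↦ ?_⟩
  obtain ⟨q, hq⟩ := hG v
  exact ⟨f.comp ℓ + q, fun y hy ↦ congrArg (f (ℓ y) + ·) (hq hy)⟩

/-- The sum of the labellings of the components is again a monotone labelling, and since each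
summand is monotone it is constant on the fibres of the sum. -/
theorem HasAffinePiecesOnLines.pi {κ : Type*} [Fintype κ] {G : κ → V → W}
    (hG : ∀ k, HasAffinePiecesOnLines (m + 1) (G k)) :
    HasAffinePiecesOnLines (m * Fintype.card κ + 1) fun x k ↦ G k x := by
  intro ℓ
  choose r hr hpiece using fun k ↦ hG k ℓ
  have hsum_le (x : ℝ) : ∑ k, (r k x : ℕ) < m * Fintype.card κ + 1 := by
    refine Nat.lt_succ_of_le ((Finset.sum_le_card_nsmul _ _ m fun k _ ↦ (r k x).is_le).trans ?_)
    simp [mul_comm]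
  have hsum_eq {x y : ℝ} (hxy : x ≤ y) (h : ∑ k, (r k x : ℕ) = ∑ k, (r k y : ℕ)) (k : κ) :
      r k x = r k y :=
    Fin.ext <|
      (Finset.sum_eq_sum_iff_of_le fun k _ ↦ Fin.le_def.mp (hr k hxy)).mp h k (Finset.mem_univ k)
  rw [← Fintype.card_fin (m * Fintype.card κ + 1)]
  refine .of_monotone (r := fun x ↦ (⟨∑ k, (r k x : ℕ), hsum_le x⟩ : Fin _))
    (fun x y hxy ↦ Fin.mk_le_mk.mpr <| Finset.sum_le_sum fun k _ ↦ Fin.le_def.mp (hr k hxy))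
    fun x ↦ ?_
  choose q hq using fun k ↦ hpiece k (r k x)
  refine ⟨AffineMap.pi q, fun y hy ↦ funext fun k ↦ hq k ?_⟩
  have h : ∑ k, (r k y : ℕ) = ∑ k, (r k x : ℕ) := Fin.ext_iff.mp hy
  exact (le_total x y).elim (fun hxy ↦ (hsum_eq hxy h.symm k).symm) fun hyx ↦ hsum_eq hyx h k

theorem HasAffinePieces.pi_map {σ : ℝ → ℝ} (hσ : HasAffinePieces (m + 1) σ) (κ : Type*)
    [Fintype κ] :
    HasAffinePiecesOnLines (m * Fintype.card κ + 1) fun (y : κ → ℝ) k ↦ σ (y k) :=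
  .pi fun k ↦
    hσ.onLines.comp_affineMap (LinearMap.proj (R := ℝ) (φ := fun _ : κ ↦ ℝ) k).toAffineMap

end AffinePieces

/-- The label of `x` is the number of parts lying strictly below `x`. -/
theorem exists_monotone_fin_of_ordConnected_partition {α : Type*} [LinearOrder α] {t : ℕ}
    {I : Fin t → Set α} (hI : ∀ i, (I i).OrdConnected)
    (hdisj : Pairwise fun i j ↦ Disjoint (I i) (I j)) (hcover : ⋃ i, I i = Set.univ) :
    ∃ r : α → Fin t, Monotone r ∧ ∀ i x y, x ∈ I i → r y = r x → y ∈ I i := by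
  classical
  let below (x : α) : Finset (Fin t) := {i | ∀ y ∈ I i, y < x}
  have mem_below {x : α} {i : Fin t} : i ∈ below x ↔ ∀ y ∈ I i, y < x := by simp [below]
  have exists_mem (x : α) : ∃ i, x ∈ I i := Set.mem_iUnion.mp (hcover ▸ Set.mem_univ x)
  have below_mono : Monotone below := fun x y hxy i hi ↦
    mem_below.mpr fun z hz ↦ (mem_below.mp hi z hz).trans_le hxy
  have card_below_lt (x : α) : (below x).card < t := by
    obtain ⟨i, hi⟩ := exists_mem x
    refine (Finset.card_lt_univ_of_notMem (x := i) fun h ↦ ?_).trans_eq (Fintype.card_fin t)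
    exact lt_irrefl x (mem_below.mp h x hi)
  have mem_of_le {x y : α} (hxy : x ≤ y) (hcard : (below x).card = (below y).card) {i : Fin t}
      (hi : x ∈ I i) : y ∈ I i := by
    by_contra hy
    have hiy : i ∈ below y := mem_below.mpr fun z hz ↦
      not_le.mp fun hyz ↦ hy ((hI i).out hi hz ⟨hxy, hyz⟩)
    rw [← Finset.eq_of_subset_of_card_le (below_mono hxy) hcard.ge] at hiy
    exact lt_irrefl x (mem_below.mp hiy x hi)
  refine ⟨fun x ↦ ⟨(below x).card, card_below_lt x⟩,
    fun x y hxy ↦ Finset.card_le_card (below_mono hxy), fun i x y hx hr ↦ ?_⟩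
  have hcard : (below y).card = (below x).card := Fin.ext_iff.mp hr
  obtain hxy | hyx := le_total x y
  · exact mem_of_le hxy hcard.symm hx
  · obtain ⟨j, hj⟩ := exists_mem y
    obtain rfl : i = j := by
      by_contra hij
      exact Set.disjoint_left.mp (hdisj hij) hx (mem_of_le hyx hcard hj)
    exact hj

theorem PiecewiseLinear.hasAffinePieces {σ : ℝ → ℝ} {t : ℕ} (hσ : PiecewiseLinear σ t) :
    HasAffinePieces t σ := by
  obtain ⟨I, -, hconv, hdisj, hcover, haff⟩ := hσ
  obtain ⟨r, hr, hrI⟩ :=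
    exists_monotone_fin_of_ordConnected_partition (fun i ↦ (hconv i).ordConnected) hdisj hcover
  rw [← Fintype.card_fin t]
  refine .of_monotone hr fun x ↦ ?_
  obtain ⟨i, hi⟩ := Set.mem_iUnion.mp (hcover ▸ Set.mem_univ x)
  obtain ⟨a, b, hab⟩ := haff i
  refine ⟨a • AffineMap.id ℝ ℝ + AffineMap.const ℝ ℝ b, fun y hy ↦ ?_⟩
  simpa using hab y (hrI i x y hi hy)

theorem PiecewiseLinear.one_le {σ : ℝ → ℝ} {t : ℕ} (hσ : PiecewiseLinear σ t) : 1 ≤ t := by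
  obtain ⟨I, -, -, -, hcover, -⟩ := hσ
  obtain ⟨i, -⟩ := Set.mem_iUnion.mp (hcover ▸ Set.mem_univ (0 : ℝ))
  exact i.pos

namespace LayeredNet

variable {n : ℕ} (N : LayeredNet n)

/-- The inputs of a hidden unit: the network input together with the outputs of all layers. Layers
that have not been evaluated yet hold `0`, so that one space serves all layers. -/
abbrev State : Type :=
  EuclideanSpace ℝ (Fin n) × ((j : ℕ) → Fin (N.width j) → ℝ)

/-- The argument `Wᵢ·(h⁰, …, hⁱ⁻¹) + bᵢ` of the activation in layer `i`. -/
noncomputable def preactivation (i : ℕ) : N.State →ᵃ[ℝ] Fin (N.width i) → ℝ :=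
  AffineMap.mk' (fun v k ↦
    (∑ m, N.Win i k m * v.1 m) + (∑ j : Fin i, ∑ m, N.W i j k m * v.2 j m) + N.b i k)
  { toFun := fun v k ↦ (∑ m, N.Win i k m * v.1 m) + ∑ j : Fin i, ∑ m, N.W i j k m * v.2 j m
    map_add' := fun u v ↦ funext fun k ↦ by
      simp only [Prod.fst_add, PiLp.add_apply, mul_add, Finset.sum_add_distrib, Prod.snd_add,
        Pi.add_apply]
      ring
    map_smul' := fun c v ↦ funext fun k ↦ by
      simp [mul_add, Finset.mul_sum, mul_left_comm] } 0 fun v ↦ funext fun k ↦ by simp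

/-- The affine map reading the output of the network off the outputs of its layers. -/
noncomputable def readout : N.State →ᵃ[ℝ] ℝ :=
  AffineMap.mk' (fun v ↦
    (∑ m, N.cin m * v.1 m) + (∑ i ∈ Finset.range N.depth, ∑ m, N.c i m * v.2 i m) + N.c0)
  { toFun := fun v ↦
      (∑ m, N.cin m * v.1 m) + ∑ i ∈ Finset.range N.depth, ∑ m, N.c i m * v.2 i m
    map_add' := fun u v ↦ by
      simp only [Prod.fst_add, PiLp.add_apply, mul_add, Finset.sum_add_distrib, Prod.snd_add,
        Pi.add_apply]
      ring
    map_smul' := fun c v ↦ by simp [mul_add, Finset.mul_sum, mul_left_comm] } 0 fun v ↦ by simp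

/-- The state of the network after its first `i` layers have been evaluated at `x`. -/
noncomputable def state (σ : ℝ → ℝ) (i : ℕ) (x : EuclideanSpace ℝ (Fin n)) : N.State :=
  (x, ∑ j ∈ Finset.range i, Pi.single j (N.layer σ x j))

variable {N} {σ : ℝ → ℝ}

theorem state_snd_of_lt {i j : ℕ} (hj : j < i) (x : EuclideanSpace ℝ (Fin n)) :
    (N.state σ i x).2 j = N.layer σ x j := by
  simp [state, Finset.sum_apply, Finset.sum_pi_single, hj]

theorem layer_eq_preactivation (x : EuclideanSpace ℝ (Fin n)) (i : ℕ) :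
    N.layer σ x i = fun k ↦ σ (N.preactivation i (N.state σ i x) k) := by
  funext k
  simp only [preactivation, AffineMap.coe_mk', state_snd_of_lt (Fin.is_lt _)]
  rw [layer, state]

theorem eval_eq_readout (x : EuclideanSpace ℝ (Fin n)) :
    N.eval σ x = N.readout (N.state σ N.depth x) := by
  have hsum : ∑ i ∈ Finset.range N.depth, ∑ m, N.c i m * (N.state σ N.depth x).2 i m =
      ∑ i ∈ Finset.range N.depth, ∑ m, N.c i m * N.layer σ x i m :=
    Finset.sum_congr rfl fun i hi ↦ by rw [state_snd_of_lt (Finset.mem_range.mp hi)]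
  simp only [readout, AffineMap.coe_mk', hsum]
  rw [eval, state]

theorem state_succ (i : ℕ) (x : EuclideanSpace ℝ (Fin n)) :
    N.state σ (i + 1) x = N.state σ i x +
      (0, Pi.single i fun k ↦ σ (N.preactivation i (N.state σ i x) k)) := by
  rw [← layer_eq_preactivation]
  simp [state, Finset.sum_range_succ]

theorem hasAffinePiecesOnLines_state {q : ℕ} (hσ : HasAffinePieces (q + 1) σ) (i : ℕ) :
    HasAffinePiecesOnLines (∏ j ∈ Finset.range i, (q * N.width j + 1)) (N.state σ i) := by
  induction i with
  | zero =>
    exact hasAffinePiecesOnLines_affineMap (LinearMap.inl ℝ (EuclideanSpace ℝ (Fin n))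
      ((j : ℕ) → Fin (N.width j) → ℝ)).toAffineMap
  | succ i ih =>
    let insertLayer : (Fin (N.width i) → ℝ) →ₗ[ℝ] N.State :=
      LinearMap.inr ℝ _ _ ∘ₗ LinearMap.single ℝ (fun j ↦ Fin (N.width j) → ℝ) i
    have hlayer : HasAffinePiecesOnLines (q * N.width i + 1) fun v : N.State ↦
        insertLayer fun k ↦ σ (N.preactivation i v k) := by
      have h := (hσ.pi_map (Fin (N.width i))).comp_affineMap (N.preactivation i)
      rw [Fintype.card_fin] at h
      exact h.affineMap_comp insertLayer.toAffineMap
    rw [Finset.prod_range_succ]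
    convert (hlayer.affineMap_add (AffineMap.id ℝ N.State)).comp ih using 1
    exact funext (state_succ i)

theorem hasAffinePiecesOnLines_eval {q : ℕ} (hσ : HasAffinePieces (q + 1) σ) :
    HasAffinePiecesOnLines (∏ j ∈ Finset.range N.depth, (q * N.width j + 1)) (N.eval σ) := by
  rw [funext eval_eq_readout]
  exact (hasAffinePiecesOnLines_state hσ N.depth).affineMap_comp N.readout

end LayeredNet

section Approximation

theorem mul_norm_sub_sq_le_of_strongConvexOn {E : Type*} [NormedAddCommGroup E] [NormedSpace ℝ E]
    {s : Set E} {c ε : ℝ} {φ : E → ℝ} (hφ : StrongConvexOn s c φ) (q : E →ᵃ[ℝ] ℝ) {x y : E}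
    (hx : x ∈ s) (hy : y ∈ s) (hq : ∀ z ∈ segment ℝ x y, |q z - φ z| ≤ ε) :
    c * ‖x - y‖ ^ 2 ≤ 16 * ε := by
  have hconv := hφ.2 hx hy one_half_pos.le one_half_pos.le (add_halves 1)
  have hmid : q ((1 / 2 : ℝ) • x + (1 / 2 : ℝ) • y) = 1 / 2 * q x + 1 / 2 * q y :=
    Convex.combo_affine_apply (by norm_num)
  have hmid_mem : (1 / 2 : ℝ) • x + (1 / 2 : ℝ) • y ∈ segment ℝ x y :=
    ⟨1 / 2, 1 / 2, by norm_num, by norm_num, by norm_num, rfl⟩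
  have hεx := abs_le.mp (hq x (left_mem_segment ℝ x y))
  have hεy := abs_le.mp (hq y (right_mem_segment ℝ x y))
  have hεmid := abs_le.mp (hq _ hmid_mem)
  simp only [smul_eq_mul] at hconv
  linarith

theorem sub_le_card_mul_of_fibers_dist_le {ι : Type*} [Fintype ι] {a b L : ℝ} (hL : 0 ≤ L)
    (r : ℝ → ι)
    (hr : ∀ x ∈ Set.Icc a b, ∀ y ∈ Set.Icc a b, r x = r y → dist x y ≤ L) :
    b - a ≤ Fintype.card ι * L := by
  have hfiber (v : ι) : MeasureTheory.volume (Set.Icc a b ∩ r ⁻¹' {v}) ≤ ENNReal.ofReal L :=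
    (Real.volume_le_diam _).trans <| Metric.ediam_le fun x hx y hy ↦ by
      rw [edist_dist]
      exact ENNReal.ofReal_le_ofReal (hr x hx.1 y hy.1 (hx.2.trans hy.2.symm))
  have hcover : Set.Icc a b ⊆ ⋃ v, Set.Icc a b ∩ r ⁻¹' {v} :=
    fun x hx ↦ Set.mem_iUnion.mpr ⟨r x, hx, rfl⟩
  refine (ENNReal.ofReal_le_ofReal_iff (by positivity)).mp ?_
  calc ENNReal.ofReal (b - a) = MeasureTheory.volume (Set.Icc a b) := Real.volume_Icc.symm
    _ ≤ ∑ v, MeasureTheory.volume (Set.Icc a b ∩ r ⁻¹' {v}) :=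
      (MeasureTheory.measure_mono hcover).trans (MeasureTheory.measure_iUnion_fintype_le _ _)
    _ ≤ ∑ _v : ι, ENNReal.ofReal L := Finset.sum_le_sum fun v _ ↦ hfiber v
    _ = ENNReal.ofReal (Fintype.card ι * L) := by
      simp [ENNReal.ofReal_mul]

theorem mul_sub_sq_le_of_hasAffinePieces {m : ℕ} {a b c ε : ℝ} {F φ : ℝ → ℝ} (hab : a ≤ b)
    (hF : HasAffinePieces m F) (hφ : StrongConvexOn (Set.Icc a b) c φ)
    (hε : ∀ s ∈ Set.Icc a b, |F s - φ s| ≤ ε) :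
    c * (b - a) ^ 2 ≤ 16 * ε * m ^ 2 := by
  have hε0 : 0 ≤ ε := (abs_nonneg _).trans (hε a (Set.left_mem_Icc.mpr hab))
  obtain hc | hc := le_or_gt c 0
  · exact (mul_nonpos_of_nonpos_of_nonneg hc (sq_nonneg _)).trans (by positivity)
  obtain ⟨r, hr, hF⟩ := hF
  have hpiece : ∀ x ∈ Set.Icc a b, ∀ y ∈ Set.Icc a b, r x = r y →
      dist x y ≤ √(16 * ε / c) := by
    intro x hx y hy hxy
    obtain ⟨q, hq⟩ := hF (r x)
    have hsegment : segment ℝ x y ⊆ Set.Icc a b ∩ r ⁻¹' {r x} :=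
      ((convex_Icc a b).inter
        (Set.ordConnected_singleton.preimage_mono hr).convex).segment_subset
        ⟨hx, rfl⟩ ⟨hy, hxy.symm⟩
    refine Real.le_sqrt_of_sq_le ((le_div_iff₀' hc).mpr ?_)
    refine mul_norm_sub_sq_le_of_strongConvexOn hφ q hx hy fun z hz ↦ ?_
    rw [← hq (hsegment hz).2]
    exact hε z (hsegment hz).1
  have hlength := sub_le_card_mul_of_fibers_dist_le (Real.sqrt_nonneg _) r hpiece
  rw [Fintype.card_fin] at hlength
  have hsq := pow_le_pow_left₀ (sub_nonneg.mpr hab) hlength 2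
  rw [mul_pow, Real.sq_sqrt (by positivity), ← mul_div_assoc, le_div_iff₀ hc] at hsq
  linarith

theorem strongConvexOn_of_hasDerivAt2_ge {D : Set ℝ} (hD : Convex ℝ D) {c : ℝ}
    {f f' f'' : ℝ → ℝ} (hf : ∀ x ∈ D, HasDerivAt f (f' x) x)
    (hf' : ∀ x ∈ D, HasDerivAt f' (f'' x) x) (hc : ∀ x ∈ D, c ≤ f'' x) :
    StrongConvexOn D c f := by
  rw [strongConvexOn_iff_convex]
  simp only [Real.norm_eq_abs, sq_abs]
  refine convexOn_of_hasDerivWithinAt2_nonneg hD (f' := fun x ↦ f' x - c * x)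
    (f'' := fun x ↦ f'' x - c) ?_ ?_ ?_ ?_
  · exact .sub (fun x hx ↦ (hf x hx).continuousAt.continuousWithinAt) (by fun_prop)
  · intro x hx
    have hquad : HasDerivAt (fun y ↦ c / 2 * y ^ 2) (c * x) x :=
      ((hasDerivAt_pow 2 x).const_mul (c / 2)).congr_deriv (by norm_num; ring)
    exact ((hf x (interior_subset hx)).sub hquad).hasDerivWithinAt
  · intro x hx
    have hlin : HasDerivAt (fun y ↦ c * y) c x := by simpa using (hasDerivAt_id' x).const_mul c
    exact ((hf' x (interior_subset hx)).sub hlin).hasDerivWithinAt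
  · exact fun x hx ↦ sub_nonneg.mpr (hc x (interior_subset hx))

theorem hasDerivAt_iteratedFDeriv_add_smul {𝕜 E F : Type*} [NontriviallyNormedField 𝕜]
    [NormedAddCommGroup E] [NormedSpace 𝕜 E] [NormedAddCommGroup F] [NormedSpace 𝕜 F]
    {f : E → F} {x e : E} {t : 𝕜} {n : ℕ} (hf : ContDiffAt 𝕜 (n + 1) f (x + t • e)) :
    HasDerivAt (fun s : 𝕜 ↦ iteratedFDeriv 𝕜 n f (x + s • e) fun _ ↦ e)
      (iteratedFDeriv 𝕜 (n + 1) f (x + t • e) fun _ ↦ e) t := by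
  have hdiff : DifferentiableAt 𝕜 (iteratedFDeriv 𝕜 n f) (x + t • e) :=
    hf.differentiableAt_iteratedFDeriv (by exact_mod_cast n.lt_succ_self)
  rw [← hf.deriv_fderiv_add_smul]
  have hline : DifferentiableAt 𝕜 (fun s : 𝕜 ↦ x + s • e) t := by fun_prop
  exact ((hdiff.continuousMultilinear_apply_const fun _ ↦ e).comp t hline).hasDerivAt

variable {E : Type*} [NormedAddCommGroup E] [NormedSpace ℝ E] {g F : E → ℝ} {z e : E}
  {a b δ ε : ℝ}

theorem strongConvexOn_comp_add_smul (ha : a ≤ 0) (hb : 0 ≤ b)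
    (hg : ∀ s ∈ Set.Icc a b, ContDiffAt ℝ 3 g (z + s • e))
    (hD3 : ∀ s ∈ Set.Icc a b, |iteratedFDeriv ℝ 3 g (z + s • e) fun _ ↦ e| ≤ δ) :
    StrongConvexOn (Set.Icc a b) ((iteratedFDeriv ℝ 2 g z fun _ ↦ e) - δ * (b - a))
      fun s ↦ g (z + s • e) := by
  have hderiv {j : ℕ} (hj : j < 3) {s : ℝ} (hs : s ∈ Set.Icc a b) :
      HasDerivAt (fun s : ℝ ↦ iteratedFDeriv ℝ j g (z + s • e) fun _ ↦ e)
        (iteratedFDeriv ℝ (j + 1) g (z + s • e) fun _ ↦ e) s :=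
    hasDerivAt_iteratedFDeriv_add_smul ((hg s hs).of_le (by exact_mod_cast hj))
  have h0 : (0 : ℝ) ∈ Set.Icc a b := ⟨ha, hb⟩
  have hδ : 0 ≤ δ := (abs_nonneg _).trans (hD3 0 h0)
  refine strongConvexOn_of_hasDerivAt2_ge (convex_Icc a b) (fun s hs ↦ hderiv (j := 0) (by simp) hs)
    (fun s hs ↦ hderiv (j := 1) (by simp) hs) fun s hs ↦ ?_
  have hmvt := (convex_Icc a b).norm_image_sub_le_of_norm_hasDerivWithin_le
    (fun s hs ↦ (hderiv (j := 2) (by simp) hs).hasDerivWithinAt) hD3 hs h0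
  have hdist : ‖(0 : ℝ) - s‖ ≤ b - a := Real.dist_le_of_mem_Icc h0 hs
  have hle := (Real.le_norm_self _).trans (hmvt.trans (mul_le_mul_of_nonneg_left hdist hδ))
  simp only [zero_smul, add_zero] at hle
  simp only [Nat.reduceAdd]
  linarith

theorem iteratedFDeriv_two_sub_mul_sq_le {m : ℕ} (ha : a ≤ 0) (hb : 0 ≤ b)
    (hF : HasAffinePiecesOnLines m F)
    (hg : ∀ s ∈ Set.Icc a b, ContDiffAt ℝ 3 g (z + s • e))
    (hD3 : ∀ s ∈ Set.Icc a b, |iteratedFDeriv ℝ 3 g (z + s • e) fun _ ↦ e| ≤ δ)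
    (hε : ∀ s ∈ Set.Icc a b, |F (z + s • e) - g (z + s • e)| ≤ ε) :
    ((iteratedFDeriv ℝ 2 g z fun _ ↦ e) - δ * (b - a)) * (b - a) ^ 2 ≤ 16 * ε * m ^ 2 := by
  have hline : (fun s : ℝ ↦ F (z + s • e)) = F ∘ AffineMap.lineMap z (z + e) := by
    funext s
    simp [AffineMap.lineMap_apply, add_comm]
  exact mul_sub_sq_le_of_hasAffinePieces (ha.trans hb) (hline ▸ hF _)
    (strongConvexOn_comp_add_smul ha hb hg hD3) hε

theorem abs_iteratedFDeriv_two_sub_mul_sq_le {m : ℕ} (ha : a ≤ 0) (hb : 0 ≤ b)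
    (hF : HasAffinePiecesOnLines m F)
    (hg : ∀ s ∈ Set.Icc a b, ContDiffAt ℝ 3 g (z + s • e))
    (hD3 : ∀ s ∈ Set.Icc a b, |iteratedFDeriv ℝ 3 g (z + s • e) fun _ ↦ e| ≤ δ)
    (hε : ∀ s ∈ Set.Icc a b, |F (z + s • e) - g (z + s • e)| ≤ ε) :
    (|iteratedFDeriv ℝ 2 g z fun _ ↦ e| - δ * (b - a)) * (b - a) ^ 2 ≤ 16 * ε * m ^ 2 := by
  obtain h | h := abs_cases (iteratedFDeriv ℝ 2 g z fun _ ↦ e)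
  · rw [h.1]
    exact iteratedFDeriv_two_sub_mul_sq_le ha hb hF hg hD3 hε
  · have hnegF : HasAffinePiecesOnLines m (-F) :=
      hF.affineMap_comp (-AffineMap.id ℝ ℝ)
    have hneg := iteratedFDeriv_two_sub_mul_sq_le (g := -g) ha hb hnegF (fun s hs ↦ (hg s hs).neg)
      (by simpa [iteratedFDeriv_neg_apply] using hD3) fun s hs ↦ by
        simpa [abs_sub_comm, add_comm, ← sub_eq_add_neg] using hε s hs
    rw [h.1]
    simpa [iteratedFDeriv_neg_apply] using hneg

end Approximation

theorem prod_le_sum_div_card_pow {ι : Type*} (s : Finset ι) {f : ι → ℝ} (hf : ∀ i ∈ s, 0 ≤ f i) :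
    ∏ i ∈ s, f i ≤ ((∑ i ∈ s, f i) / s.card) ^ s.card := by
  obtain rfl | hs := s.eq_empty_or_nonempty
  · simp
  have hcard : (0 : ℝ) < s.card := Nat.cast_pos.mpr hs.card_pos
  have hamgm := Real.geom_mean_le_arith_mean s (fun _ ↦ 1) f (by simp) (by simpa using hcard) hf
  simp only [Real.rpow_one, one_mul, Finset.sum_const, nsmul_eq_mul, mul_one] at hamgm
  have hpow := pow_le_pow_left₀ (Real.rpow_nonneg (Finset.prod_nonneg hf) _) hamgm s.card
  rwa [Real.rpow_inv_natCast_pow (Finset.prod_nonneg hf) hs.card_ne_zero] at hpow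

theorem LayeredNet.prod_width_le {n : ℕ} (N : LayeredNet n) (q : ℕ) :
    ((∏ j ∈ Finset.range N.depth, (q * N.width j + 1) : ℕ) : ℝ) ≤
      (q * ((N.numHidden : ℝ) / N.depth) + 1) ^ N.depth := by
  obtain hd | hd := N.depth.eq_zero_or_pos
  · simp [hd]
  have hd0 : (N.depth : ℝ) ≠ 0 := by positivity
  have hmean : (∑ j ∈ Finset.range N.depth, ((q : ℝ) * N.width j + 1)) / N.depth =
      q * ((N.numHidden : ℝ) / N.depth) + 1 := by
    simp only [numHidden, Nat.cast_sum, Finset.sum_add_distrib, ← Finset.mul_sum, Finset.sum_const,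
      Finset.card_range, nsmul_eq_mul, mul_one]
    field_simp
  have h := prod_le_sum_div_card_pow (Finset.range N.depth)
    (f := fun j ↦ (q : ℝ) * N.width j + 1) fun _ _ ↦ by positivity
  rw [Finset.card_range, hmean] at h
  exact_mod_cast h

theorem zero_mem_unitCube (n : ℕ) : (0 : EuclideanSpace ℝ (Fin n)) ∈ unitCube n := by
  simp [unitCube]

theorem add_smul_single_mem_unitCube {n : ℕ} {z : EuclideanSpace ℝ (Fin n)}
    (hz : z ∈ unitCube n) (k : Fin n) {s : ℝ} (hs : s ∈ Set.Icc (-z k) (1 - z k)) :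
    z + s • EuclideanSpace.single k 1 ∈ unitCube n := by
  intro j
  obtain rfl | hjk := eq_or_ne j k
  · simpa [neg_le_iff_add_nonneg', le_sub_iff_add_le'] using hs
  · simpa [hjk] using hz j

theorem abs_hess_diag_sub_le {n m : ℕ} {g F : EuclideanSpace ℝ (Fin n) → ℝ} {δ ε : ℝ} {k : Fin n}
    (hF : HasAffinePiecesOnLines m F) (hg : ∀ x ∈ unitCube n, ContDiffAt ℝ 3 g x)
    (hD3 : ∀ x ∈ unitCube n, |iteratedFDeriv ℝ 3 g x
      ![EuclideanSpace.single k 1, EuclideanSpace.single k 1, EuclideanSpace.single k 1]| ≤ δ)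
    (hε : ∀ x ∈ unitCube n, |F x - g x| ≤ ε) {z : EuclideanSpace ℝ (Fin n)}
    (hz : z ∈ unitCube n) : |hess g z k k| - δ ≤ 16 * ε * m ^ 2 := by
  have hdiag₂ (e : EuclideanSpace ℝ (Fin n)) : ![e, e] = fun _ ↦ e :=
    funext fun i ↦ by fin_cases i <;> rfl
  have hdiag₃ (e : EuclideanSpace ℝ (Fin n)) : ![e, e, e] = fun _ ↦ e :=
    funext fun i ↦ by fin_cases i <;> rfl
  simp only [hdiag₃] at hD3
  have hline := fun s ↦ add_smul_single_mem_unitCube hz k (s := s)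
  have h := abs_iteratedFDeriv_two_sub_mul_sq_le (neg_nonpos.mpr (hz k).1)
    (sub_nonneg.mpr (hz k).2) hF (fun s hs ↦ hg _ (hline s hs)) (fun s hs ↦ hD3 _ (hline s hs))
    fun s hs ↦ hε _ (hline s hs)
  rw [hess, hdiag₂]
  simpa using h

theorem abs_le_mul_natCast_rpow {α : Type*} {n : ℕ} {s : Set α} {a : α → Fin n → ℝ} {δ p : ℝ}
    (hs : s.Nonempty) (hp : 0 < p) (ha : ∀ x ∈ s, ∀ k, |a x k| ≤ δ) :
    0 ≤ δ * (n : ℝ) ^ p ∧ ∀ x ∈ s, ∀ k, |a x k| ≤ δ * (n : ℝ) ^ p := by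
  obtain ⟨x₀, hx₀⟩ := hs
  have hδ (k : Fin n) : 0 ≤ δ := (abs_nonneg _).trans (ha x₀ hx₀ k)
  refine ⟨?_, fun x hx k ↦ (ha x hx k).trans <| le_mul_of_one_le_right (hδ k) <|
    Real.one_le_rpow (Nat.one_le_cast.mpr k.pos) hp.le⟩
  obtain rfl | hn := n.eq_zero_or_pos
  · simp [Real.zero_rpow hp.ne']
  · exact mul_nonneg (hδ ⟨0, hn⟩) (by positivity)

theorem network_laplacian_lower_bound_general {n : ℕ} (g : EuclideanSpace ℝ (Fin n) → ℝ)
    (hg : ∀ x ∈ unitCube n, ContDiffAt ℝ 3 g x) (δ : ℝ) (hδ : 0 ≤ δ)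
    (hD3 : ∀ x ∈ unitCube n, ∀ k : Fin n,
      |iteratedFDeriv ℝ 3 g x
        ![EuclideanSpace.single k 1, EuclideanSpace.single k 1, EuclideanSpace.single k 1]| ≤ δ)
    (ε : ℝ) (hε : 0 < ε) (N : LayeredNet n) (σ : ℝ → ℝ) (t : ℕ) (hσ : PiecewiseLinear σ t)
    (hf : ∀ z ∈ unitCube n, |N.eval σ z - g z| ≤ ε) :
    (((t : ℝ) - 1) * ((N.numHidden : ℝ) / (N.depth : ℝ)) + 1) ^ N.depth ≥
      √(max ((sSup ((fun z ↦ |∑ k, hess g z k k|) '' unitCube n)) * (n : ℝ)⁻¹ - δ) 0 /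
        (16 * ε)) := by
  obtain ⟨q, rfl⟩ : ∃ q, t = q + 1 := ⟨t - 1, (Nat.sub_add_cancel hσ.one_le).symm⟩
  set P : ℕ := ∏ j ∈ Finset.range N.depth, (q * N.width j + 1)
  have hdiag {z} (hz : z ∈ unitCube n) (k : Fin n) : |hess g z k k| ≤ 16 * ε * P ^ 2 + δ :=
    sub_le_iff_le_add.mp <| abs_hess_diag_sub_le
      (LayeredNet.hasAffinePiecesOnLines_eval hσ.hasAffinePieces) hg (hD3 · · k) hf hz
  have hsup : sSup ((fun z ↦ |∑ k, hess g z k k|) '' unitCube n) ≤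
      (16 * ε * P ^ 2 + δ) * n := by
    refine Real.sSup_le (Set.forall_mem_image.mpr fun z hz ↦ ?_) (by positivity)
    refine (Finset.abs_sum_le_sum_abs _ _).trans ?_
    refine (Finset.sum_le_card_nsmul _ _ _ fun k _ ↦ hdiag hz k).trans_eq ?_
    rw [Finset.card_univ, Fintype.card_fin, nsmul_eq_mul, mul_comm]
  have hmean : sSup ((fun z ↦ |∑ k, hess g z k k|) '' unitCube n) * (n : ℝ)⁻¹ ≤
      16 * ε * P ^ 2 + δ :=
    mul_inv_le_of_le_mul₀ n.cast_nonneg (by positivity) hsup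
  have hsqrt : √(max ((sSup ((fun z ↦ |∑ k, hess g z k k|) '' unitCube n)) * (n : ℝ)⁻¹ - δ) 0 /
      (16 * ε)) ≤ P := by
    refine Real.sqrt_le_iff.mpr ⟨by positivity, (div_le_iff₀' (by positivity)).mpr ?_⟩
    exact max_le (sub_le_iff_le_add.mpr hmean) (by positivity)
  rw [Nat.cast_succ, add_sub_cancel_right]
  exact hsqrt.trans (N.prod_width_le q)

/-- Theorem 2: if a layered network with piecewise linear activation (`t` pieces)
ε-approximates on `[0,1]ⁿ` a C³ function `g` whose third partial derivatives are bounded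
by `δ`, then `((t − 1)·ω + 1)^d ≥ sqrt((max_z |Δg(z)|·n⁻¹ − δ·n^{3/2})⁺ / (16 ε))`. -/
theorem network_laplacian_lower_bound {n : ℕ}
    (U : Set (EuclideanSpace ℝ (Fin n))) (hU : IsOpen U) (hRU : unitCube n ⊆ U)
    (g : EuclideanSpace ℝ (Fin n) → ℝ) (hg : ContDiffOn ℝ 3 g U) (δ : ℝ)
    (hD3 : ∀ x ∈ unitCube n, ∀ i j k : Fin n,
      |iteratedFDeriv ℝ 3 g x
        ![EuclideanSpace.single i 1, EuclideanSpace.single j 1, EuclideanSpace.single k 1]| ≤ δ)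
    (ε : ℝ) (hε : 0 < ε)
    (N : LayeredNet n) (hd : 1 ≤ N.depth) (hw : ∀ i < N.depth, 1 ≤ N.width i)
    (σ : ℝ → ℝ) (t : ℕ) (ht : 1 ≤ t) (hσ : PiecewiseLinear σ t)
    (hf : ∀ z ∈ unitCube n, |N.eval σ z - g z| ≤ ε) :
    (((t : ℝ) - 1) * ((N.numHidden : ℝ) / (N.depth : ℝ)) + 1) ^ N.depth ≥
      Real.sqrt
        (max ((sSup ((fun z => |∑ k, hess g z k k|) '' unitCube n)) * (n : ℝ)⁻¹
            - δ * (n : ℝ) ^ ((3 : ℝ) / 2)) 0 / (16 * ε)) := by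
  obtain ⟨hδ, hpure⟩ := abs_le_mul_natCast_rpow (p := (3 : ℝ) / 2) ⟨0, zero_mem_unitCube n⟩
    (by norm_num) fun x hx k ↦ hD3 x hx k k k
  exact network_laplacian_lower_bound_general g
    (fun x hx ↦ hg.contDiffAt (hU.mem_nhds (hRU hx))) _ hδ hpure ε hε N σ t hσ hf
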